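/- Let Q be a commutative, integral quantale and (X,α) a symmetric Q-category. Then the tight span (T X, σ) is hypercomplete: for every Θ : T X → Q with Θ μ * Θ λ ≤ σ μ λ for all μ, λ ∈ T X, there exists ν ∈ T X such that Θ μ ≤ σ μ ν for all μ ∈ T X. -/

import Mathlib

/-!
Call `f : X → Q` *compatible* if `f x * f y ≤ α x y` for all `x, y`. A maximal compatible `ν`
lies in the tight span: if `q * ν y ≤ α x y` for all `y`, then replacing `ν x` by `ν x ⊔ q` keeps
`ν` compatible (the diagonal condition at `x` is vacuous, since `α x x = 1 = ⊤`), so `q ≤ ν x`.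

Compatible functions are closed under suprema of chains, so by Zorn's lemma every compatible
function lies below an element of the tight span. Applied to `ψ x = ⨆ μ ∈ T X, Θ μ * μ x`, which
is compatible because `Θ μ * Θ λ * μ x * λ y ≤ σ μ λ * μ x * λ y ≤ λ x * λ y ≤ α x y`, this gives
`ν` with `Θ μ * μ x ≤ ν x`, that is, `Θ μ ≤ σ μ ν`.
-/


/-- The residuation `p ⇨ r` of a quantale, right adjoint to multiplication:
`p * q ≤ r ↔ q ≤ qimp p r`. -/
def qimp {Q : Type*} [CompleteLattice Q] [Mul Q] (p r : Q) : Q :=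
  sSup {q | p * q ≤ r}

/-- The tight span of a symmetric Q-category `(X, α)`. -/
def tightSpan {Q X : Type*} [CompleteLattice Q] [Mul Q] (α : X → X → Q) :
    Set (X → Q) :=
  {μ | ∀ x, μ x = ⨅ y, qimp (μ y) (α x y)}

/-- The hom of the tight span: `σ μ λ = ⨅ x, (μ x ⇨ λ x)`. -/
def tsHom {Q X : Type*} [CompleteLattice Q] [Mul Q] (μ lam : X → Q) : Q :=
  ⨅ x, qimp (μ x) (lam x)

section Quantale

variable {Q : Type*} [CompleteLattice Q] [CommMonoid Q] [IsQuantale Q]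

theorem le_qimp_iff {p q r : Q} : q ≤ qimp p r ↔ p * q ≤ r :=
  Quantale.rightMulResiduation_le_iff_mul_le

theorem quantale_mul_le_mul {a b c d : Q} (h : a ≤ b) (k : c ≤ d) : a * c ≤ b * d := by
  have h1 : a * c ≤ a * d := le_qimp_iff.1 (k.trans (le_qimp_iff.2 le_rfl))
  have h2 : d * a ≤ d * b := le_qimp_iff.1 (h.trans (le_qimp_iff.2 le_rfl))
  rw [mul_comm d a, mul_comm d b] at h2
  exact h1.trans h2

theorem le_tsHom_iff {X : Type*} {f g : X → Q} {q : Q} :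
    q ≤ tsHom f g ↔ ∀ x, f x * q ≤ g x := by
  simp only [tsHom, le_iInf_iff, le_qimp_iff]

/-- The functions `f` with `f x * f y ≤ α x y` for all `x, y`. -/
def compatibleSet {X : Type*} (α : X → X → Q) : Set (X → Q) :=
  {f | ∀ x y, f x * f y ≤ α x y}

theorem mem_compatibleSet_of_mem_tightSpan {X : Type*} {α : X → X → Q} {f : X → Q}
    (hf : f ∈ tightSpan α) : f ∈ compatibleSet α := by
  intro x y
  have h : f x ≤ qimp (f y) (α x y) := (hf x).le.trans (iInf_le _ y)
  rw [mul_comm]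
  exact le_qimp_iff.1 h

theorem sSup_chain_mem_compatibleSet {X : Type*} {α : X → X → Q} {c : Set (X → Q)}
    (hc : c ⊆ compatibleSet α) (hchain : IsChain (· ≤ ·) c) : sSup c ∈ compatibleSet α := by
  intro x y
  rw [sSup_apply, sSup_apply, Quantale.iSup_mul_distrib]
  refine iSup_le fun f => ?_
  rw [Quantale.mul_iSup_distrib]
  refine iSup_le fun g => ?_
  rcases hchain.total f.2 g.2 with h | h
  · exact (quantale_mul_le_mul (h x) le_rfl).trans (hc g.2 x y)
  · exact (quantale_mul_le_mul le_rfl (h y)).trans (hc f.2 x y)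

open Classical in
/-- Membership in the tight span follows from maximality, by enlarging a single value. -/
theorem mem_tightSpan_of_maximal (hint : (⊤ : Q) = 1) {X : Type*} {α : X → X → Q}
    (hα1 : ∀ x, α x x = 1) (hαsym : ∀ x y, α x y = α y x) {f : X → Q}
    (hf : Maximal (· ∈ compatibleSet α) f) : f ∈ tightSpan α := by
  intro x
  apply le_antisymm
  · refine le_iInf fun y => le_qimp_iff.2 ?_
    rw [mul_comm]
    exact hf.prop x y
  · set q := ⨅ y, qimp (f y) (α x y) with hq
    have hqy : ∀ y, q * f y ≤ α x y := fun y => by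
      rw [mul_comm]
      exact le_qimp_iff.1 (iInf_le _ y)
    have hx : ∀ y, (f x ⊔ q) * f y ≤ α x y := fun y => by
      rw [Quantale.sup_mul_distrib]
      exact sup_le (hf.prop x y) (hqy y)
    have hmem : Function.update f x (f x ⊔ q) ∈ compatibleSet α := by
      intro y z
      by_cases hy : y = x <;> by_cases hz : z = x
      · -- On the diagonal the bound is `⊤`.
        rw [hy, hz, hα1, ← hint]
        exact le_top
      · subst hy
        simpa [hz] using hx z
      · subst hz
        rw [mul_comm, hαsym]
        simpa [hy] using hx y
      · simpa [hy, hz] using hf.prop y z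
    have hle : f ≤ Function.update f x (f x ⊔ q) := by
      rw [le_update_iff]
      exact ⟨le_sup_left, fun _ _ => le_rfl⟩
    have := hf.le_of_ge hmem hle x
    rw [Function.update_self] at this
    exact le_sup_right.trans this

theorem exists_tightSpan_ge (hint : (⊤ : Q) = 1) {X : Type*} {α : X → X → Q}
    (hα1 : ∀ x, α x x = 1) (hαsym : ∀ x y, α x y = α y x) {f : X → Q}
    (hf : f ∈ compatibleSet α) : ∃ g ∈ tightSpan α, f ≤ g := by
  obtain ⟨g, hfg, hg⟩ := zorn_le_nonempty₀ (compatibleSet α)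
    (fun c hc hchain _ _ => ⟨sSup c, sSup_chain_mem_compatibleSet hc hchain,
      fun _ hz => le_sSup hz⟩) f hf
  exact ⟨g, mem_tightSpan_of_maximal hint hα1 hαsym hg, hfg⟩

end Quantale

/-- the tight span is hypercomplete. -/
theorem tightSpan_hypercomplete
    {Q : Type*} [CompleteLattice Q] [CommMonoid Q] [IsQuantale Q]
    (hint : (⊤ : Q) = 1)
    {X : Type*} (α : X → X → Q)
    (hα1 : ∀ x, α x x = 1)
    (hαsym : ∀ x y, α x y = α y x)
    (hαtrans : ∀ x y z, α y z * α x y ≤ α x z)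
    (Θ : (X → Q) → Q)
    (hΘ : ∀ μ ∈ tightSpan α, ∀ lam ∈ tightSpan α, Θ μ * Θ lam ≤ tsHom μ lam) :
    ∃ ν ∈ tightSpan α, ∀ μ ∈ tightSpan α, Θ μ ≤ tsHom μ ν := by
  have hψ : (fun x => ⨆ μ : tightSpan α, Θ μ * μ.1 x) ∈ compatibleSet α := by
    intro x y
    simp only [Quantale.iSup_mul_distrib, Quantale.mul_iSup_distrib]
    refine iSup_le fun μ => iSup_le fun lam => ?_
    have h : ∀ μ lam : tightSpan α, μ.1 x * (Θ μ * Θ lam) ≤ lam.1 x := fun μ lam =>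
      le_tsHom_iff.1 (hΘ μ μ.2 lam lam.2) x
    have e : ∀ a b c d : Q, a * b * (c * d) = b * (a * c) * d := fun a b c d => by ac_rfl
    have key : ∀ μ lam : tightSpan α, Θ μ * μ.1 x * (Θ lam * lam.1 y) ≤ α x y :=
      fun μ lam => (e _ _ _ _).le.trans ((quantale_mul_le_mul (h μ lam) le_rfl).trans
        (mem_compatibleSet_of_mem_tightSpan lam.2 x y))
    exact key _ _
  obtain ⟨ν, hν, hle⟩ := exists_tightSpan_ge hint hα1 hαsym hψ
  refine ⟨ν, hν, fun μ hμ => le_tsHom_iff.2 fun x => ?_⟩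
  rw [mul_comm]
  exact (le_iSup (fun μ : tightSpan α => Θ μ * μ.1 x) ⟨μ, hμ⟩).trans (hle x)
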